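/- arXiv:2603.18955 — 2 statements merged into one kernel-verified Lean document; each statement's English description precedes it below -/
import Mathlib

section
/- There exists a set A ⊆ ℂ that is not Borel measurable such that, for the SCI computational problem with Ω = ℂ, M = {0,1} equipped with the discrete metric, Ξ = 1_A the indicator function of A, and Λ = {id_ℂ}: (1) there is a general algorithm (Γ, ΛΓ) with Γ = Ξ (so SCI_G of the problem equals 0); while (2) for every k ∈ ℕ₀ there is no height-k tower computing Ξ all of whose deepest base maps Γ_{n_k,…,n_1} : ℂ → {0,1} are Borel measurable. -/
/-!
A countably generated σ-algebra has at most `𝔠` members, whereas `ℂ` has `2 ^ 𝔠` subsets, so some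
`A ⊆ ℂ` is not Borel. One query of an injective function determines the input, which makes every
map on `ℂ` a general algorithm, however irregular. Measurability, on the other hand, passes to
pointwise limits of sequences, so a tower of any height with Borel base maps only reaches Borel
maps, and `1_A` is not one of them.
-/

/-- The two-point metric space `{0,1} ⊆ ℝ` (the inherited metric is the discrete metric). -/
abbrev M01 : Type := ({0, 1} : Set ℝ)

/-- The point `1` of `{0,1}`. -/
def m1 : M01 := ⟨1, by simp⟩

/-- A general algorithm: output map plus finite query policy valued in `Λ`. -/
def IsGenAlg {Ω M : Type*} (Λ : Set (Ω → ℂ)) (Γ : Ω → M) : Prop :=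
  ∃ Q : Ω → Finset (Ω → ℂ),
    (∀ A, ↑(Q A) ⊆ Λ) ∧
    (∀ A B, (∀ f ∈ Q A, f B = f A) → Γ B = Γ A) ∧
    (∀ A B, (∀ f ∈ Q A, f B = f A) → Q B = Q A)

/-- Height-`k` towers of general algorithms `ℂ → {0,1}` whose deepest base maps are moreover
Borel measurable; limits are pointwise limits in the (discrete) metric of `{0,1}`. -/
def TowerBor (Λ : Set (ℂ → ℂ)) : ℕ → (ℂ → M01) → Prop
  | 0, Ξ => IsGenAlg Λ Ξ ∧ Measurable Ξ
  | (k+1), Ξ => ∃ Γ : ℕ → ℂ → M01,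
      (∀ n, IsGenAlg Λ (Γ n)) ∧ (∀ n, TowerBor Λ k (Γ n)) ∧
      ∀ z, Filter.Tendsto (fun n => Γ n z) Filter.atTop (nhds (Ξ z))

section NonmeasurableSet

open Cardinal MeasurableSpace

variable {α : Type*} [MeasurableSpace α] [CountablyGenerated α]

theorem mk_measurableSet_le_continuum : #{s : Set α | MeasurableSet s} ≤ 𝔠 := by
  rw [← generateFrom_countableGeneratingSet (α := α)]
  exact cardinal_measurableSet_le_continuum
    (countable_countableGeneratingSet.le_aleph0.trans aleph0_le_continuum)

theorem exists_not_measurableSet_of_continuum_le_mk (hα : 𝔠 ≤ #α) :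
    ∃ s : Set α, ¬ MeasurableSet s := by
  by_contra! hall
  have huniv : {s : Set α | MeasurableSet s} = Set.univ := Set.eq_univ_of_forall hall
  have hlt : #α < #{s : Set α | MeasurableSet s} := by
    rw [huniv, mk_univ, mk_set]
    exact cantor #α
  exact (hα.trans_lt hlt).not_ge mk_measurableSet_le_continuum

end NonmeasurableSet

section Indicator

variable {Ω : Type*}

/-- The indicator function `1_A` of a set `A` as a map into `{0,1}`: Mathlib's real-valued
`Set.indicator`, with codomain restricted to `M01`. -/
noncomputable def indicatorM01 (A : Set Ω) (ω : Ω) : M01 :=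
  ⟨A.indicator 1 ω, Set.indicator_eq_zero_or_self A 1 ω⟩

theorem indicatorM01_preimage_m1 (A : Set Ω) : indicatorM01 A ⁻¹' {m1} = A := by
  ext ω
  exact Subtype.ext_iff.trans (Set.indicator_eq_one_iff_mem ℝ)

theorem measurableSet_of_measurable_indicatorM01 [MeasurableSpace Ω] {A : Set Ω}
    (h : Measurable (indicatorM01 A)) : MeasurableSet A :=
  indicatorM01_preimage_m1 A ▸ h (measurableSet_singleton m1)

end Indicator

theorem isGenAlg_of_factorsThrough {Ω M : Type*} {Λ : Set (Ω → ℂ)} {f : Ω → ℂ} {Γ : Ω → M}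
    (hf : f ∈ Λ) (hΓ : Γ.FactorsThrough f) : IsGenAlg Λ Γ :=
  ⟨fun _ => {f}, fun _ => by simpa only [Finset.coe_singleton, Set.singleton_subset_iff] using hf,
    fun _ _ h => hΓ (h f (Finset.mem_singleton_self f)), fun _ _ _ => rfl⟩

theorem TowerBor.measurable {Λ : Set (ℂ → ℂ)} :
    ∀ {k : ℕ} {Ξ : ℂ → M01}, TowerBor Λ k Ξ → Measurable Ξ
  | 0, _, ⟨_, hΞ⟩ => hΞ
  | _ + 1, _, ⟨_, _, hΓ, hlim⟩ =>
    measurable_of_tendsto_metrizable (fun n => (hΓ n).measurable) (tendsto_pi_nhds.mpr hlim)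

theorem stmt7_general {A : Set ℂ} (hA : ¬ MeasurableSet A) {Λ : Set (ℂ → ℂ)} {f : ℂ → ℂ}
    (hfΛ : f ∈ Λ) (hf : f.Injective) :
    IsGenAlg Λ (indicatorM01 A) ∧ ∀ k : ℕ, ¬ TowerBor Λ k (indicatorM01 A) :=
  ⟨isGenAlg_of_factorsThrough hfΛ (hf.factorsThrough _),
    fun _ hk => hA (measurableSet_of_measurable_indicatorM01 hk.measurable)⟩

/-- There is a non-Borel set `A ⊆ ℂ` such that for the SCI problem with `Ω = ℂ`,
`M = {0,1}` discrete, `Ξ = 1_A` and `Λ = {id_ℂ}`: (1) `Ξ` itself is a general algorithm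
(hence `SCI_G = 0`), while (2) for no `k` is there a height-`k` tower computing `Ξ` all of
whose deepest base maps are Borel measurable. -/
theorem stmt7 :
    ∃ (A : Set ℂ) (Ξ : ℂ → M01),
      ¬ MeasurableSet A ∧
      A = Ξ ⁻¹' {m1} ∧
      IsGenAlg ({id} : Set (ℂ → ℂ)) Ξ ∧
      ∀ k : ℕ, ¬ TowerBor ({id} : Set (ℂ → ℂ)) k Ξ := by
  obtain ⟨A, hA⟩ := exists_not_measurableSet_of_continuum_le_mk Cardinal.mk_complex.ge
  exact ⟨A, indicatorM01 A, hA, (indicatorM01_preimage_m1 A).symm,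
    stmt7_general hA (Set.mem_singleton id) Function.injective_id⟩
end

section
/- Let X := { x ∈ {0,1}^{ℕ×ℕ} : lim_{n→∞} Σ_{m=1}^∞ 2^{-m} x(n,m) exists }, let M = [0,1] with the usual metric, and let Λ = { π_{n,m} : x ↦ x(n,m) | n,m ∈ ℕ } be the coordinate evaluations. Define Γ_n(x) := Σ_{m=1}^∞ 2^{-m} x(n,m), Γ_{n,k}(x) := Σ_{m=1}^k 2^{-m} x(n,m), and Ξ(x) := lim_{n→∞} Γ_n(x). Then: (a) for every (n,k), the pair (Γ_{n,k}, constant query policy {π_{n,1},…,π_{n,k}}) is a general algorithm; (b) for every x ∈ X and every n, lim_{k→∞} Γ_{n,k}(x) = Γ_n(x), and lim_{n→∞} Γ_n(x) = Ξ(x); (c) for every n, Γ_n is not a general algorithm: there is no query policy Λ_{Γ_n} : X → finite subsets of Λ satisfying the general-algorithm axioms for Γ_n. Consequently, Hansen's original height-2 tower definition (which imposes the finite-information requirement only on the deepest estimators) is strictly weaker than the tower definition requiring all levels to be general algorithms. -/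
/-!
A general algorithm reads finitely many evaluations of each input. Hence it is locally constant for
pointwise convergence of evaluations: if every evaluation in `Λ` takes its value at `A` eventually
along a family of inputs, then so does `Γ`. The matrices with a single `1` at `(n, m)` converge in
this sense to the zero matrix as `m → ∞`, while their `n`-th row sums `2^{-(m+1)}` are never `0`;
so `Γ_n` is not a general algorithm.
-/

open Filter

noncomputable section

/-- The real value of the bit `x n m ∈ {0,1}`. -/
def seqVal (x : ℕ → ℕ → Bool) (n m : ℕ) : ℝ := if x n m then 1 else 0

/-- The full row sum `Σ_m 2^{-(m+1)} x(n,m)`. -/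
def rowSum (x : ℕ → ℕ → Bool) (n : ℕ) : ℝ := ∑' m : ℕ, (2 : ℝ)⁻¹ ^ (m + 1) * seqVal x n m

/-- The partial row sum `Σ_{m<k} 2^{-(m+1)} x(n,m)`. -/
def rowPartial (x : ℕ → ℕ → Bool) (n k : ℕ) : ℝ :=
  ∑ m ∈ Finset.range k, (2 : ℝ)⁻¹ ^ (m + 1) * seqVal x n m

/-- The input class `X`: those `x ∈ {0,1}^{ℕ×ℕ}` for which `lim_n Σ_m 2^{-(m+1)} x(n,m)`
exists. -/
def Xt : Type := {x : ℕ → ℕ → Bool // ∃ L : ℝ, Tendsto (rowSum x) atTop (nhds L)}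

/-- The coordinate evaluation `π_{n,m}(x) = x(n,m)` (as a complex number). -/
def coordEval (n m : ℕ) : Xt → ℂ := fun x => ((seqVal x.1 n m : ℝ) : ℂ)

/-- The evaluation set of all coordinate evaluations. -/
def ΛX : Set (Xt → ℂ) := {g | ∃ n m : ℕ, g = coordEval n m}

/-- The target map `Ξ(x) = lim_n Γ_n(x)`. -/
def XiH (x : Xt) : ℝ := x.2.choose

theorem IsGenAlg.eventually_eq {Ω M ι : Type*} {Λ : Set (Ω → ℂ)} {Γ : Ω → M}
    (hΓ : IsGenAlg Λ Γ) {l : Filter ι} {u : ι → Ω} {A : Ω}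
    (hu : ∀ f ∈ Λ, ∀ᶠ i in l, f (u i) = f A) : ∀ᶠ i in l, Γ (u i) = Γ A := by
  obtain ⟨Q, hQΛ, hQΓ, -⟩ := hΓ
  have agree : ∀ᶠ i in l, ∀ f ∈ Q A, f (u i) = f A :=
    (Q A).eventually_all.2 fun f hf => hu f (hQΛ A hf)
  exact agree.mono fun i hi => hQΓ A (u i) hi

theorem coordEval_eq_iff {n m : ℕ} {x y : Xt} :
    coordEval n m x = coordEval n m y ↔ seqVal x.1 n m = seqVal y.1 n m :=
  Complex.ofReal_inj

/-- The constant query policy `{π_{n,m} : m < k}` of the estimator `Γ_{n,k}`. -/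
def rowQueries (n k : ℕ) : Finset (Xt → ℂ) :=
  ((Set.finite_Iio k).image (coordEval n)).toFinset

theorem coe_rowQueries (n k : ℕ) :
    (rowQueries n k : Set (Xt → ℂ)) = coordEval n '' Set.Iio k :=
  Set.Finite.coe_toFinset _

theorem rowQueries_subset_ΛX (n k : ℕ) : (rowQueries n k : Set (Xt → ℂ)) ⊆ ΛX := by
  rw [coe_rowQueries]
  rintro _ ⟨m, -, rfl⟩
  exact ⟨n, m, rfl⟩

theorem rowPartial_eq_of_rowQueries {n k : ℕ} {x y : Xt} (h : ∀ g ∈ rowQueries n k, g y = g x) :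
    rowPartial y.1 n k = rowPartial x.1 n k := by
  refine Finset.sum_congr rfl fun m hm => ?_
  have hbit : seqVal y.1 n m = seqVal x.1 n m :=
    coordEval_eq_iff.1 <| h _ <| (Set.Finite.mem_toFinset _).2 ⟨m, Finset.mem_range.1 hm, rfl⟩
  rw [hbit]

theorem seqVal_nonneg (x : ℕ → ℕ → Bool) (n m : ℕ) : 0 ≤ seqVal x n m := by
  unfold seqVal
  split_ifs <;> norm_num

theorem seqVal_le_one (x : ℕ → ℕ → Bool) (n m : ℕ) : seqVal x n m ≤ 1 := by
  unfold seqVal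
  split_ifs <;> norm_num

theorem summable_row (x : ℕ → ℕ → Bool) (n : ℕ) :
    Summable fun m : ℕ => (2 : ℝ)⁻¹ ^ (m + 1) * seqVal x n m := by
  have geometric : Summable fun m : ℕ => (2 : ℝ)⁻¹ ^ (m + 1) :=
    (summable_nat_add_iff 1).2 (summable_geometric_of_lt_one (by norm_num) (by norm_num))
  exact geometric.of_nonneg_of_le
    (fun m => mul_nonneg (by positivity) (seqVal_nonneg x n m))
    (fun m => mul_le_of_le_one_right (by positivity) (seqVal_le_one x n m))

theorem tendsto_rowPartial (x : ℕ → ℕ → Bool) (n : ℕ) :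
    Tendsto (rowPartial x n) atTop (nhds (rowSum x n)) :=
  (summable_row x n).hasSum.tendsto_sum_nat

theorem rowSum_eq_zero {x : ℕ → ℕ → Bool} {n : ℕ} (h : ∀ m, x n m = false) : rowSum x n = 0 := by
  simp [rowSum, seqVal, h]

theorem tendsto_rowSum_zero_of_eventually {x : ℕ → ℕ → Bool}
    (h : ∀ᶠ n in atTop, ∀ m, x n m = false) :
    Tendsto (rowSum x) atTop (nhds 0) :=
  tendsto_const_nhds.congr' (h.mono fun _ hn => (rowSum_eq_zero hn).symm)

/-- The zero matrix as an input; the point at which `Γ_n` fails to be locally constant. -/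
def zeroInput : Xt :=
  ⟨fun _ _ => false, 0, tendsto_rowSum_zero_of_eventually (Eventually.of_forall fun _ _ => rfl)⟩

/-- The matrix unit `E_{n,m}`, whose only `1` is at `(n, m)`, as an input; these approximate
`zeroInput` as `m → ∞`. -/
def unitInput (n m : ℕ) : Xt :=
  ⟨fun i j => decide (i = n ∧ j = m), 0, tendsto_rowSum_zero_of_eventually <|
    (eventually_gt_atTop n).mono fun _ hi _ => decide_eq_false fun h => hi.ne' h.1⟩

theorem rowSum_zeroInput (n : ℕ) : rowSum zeroInput.1 n = 0 :=
  rowSum_eq_zero fun _ => rfl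

theorem rowSum_unitInput (n m : ℕ) : rowSum (unitInput n m).1 n = (2 : ℝ)⁻¹ ^ (m + 1) := by
  simp [rowSum, seqVal, unitInput]

theorem eventually_coordEval_unitInput_eq (n i j : ℕ) :
    ∀ᶠ m in atTop, coordEval i j (unitInput n m) = coordEval i j zeroInput := by
  filter_upwards [eventually_gt_atTop j] with m hm
  rw [coordEval_eq_iff]
  simp [seqVal, unitInput, zeroInput, hm.ne]

theorem not_isGenAlg_rowSum (n : ℕ) : ¬ IsGenAlg ΛX (fun x : Xt => rowSum x.1 n) := by
  intro hΓ
  have eventually_rowSum_eq : ∀ᶠ m in atTop, rowSum (unitInput n m).1 n = rowSum zeroInput.1 n := by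
    refine hΓ.eventually_eq ?_
    rintro _ ⟨i, j, rfl⟩
    exact eventually_coordEval_unitInput_eq n i j
  obtain ⟨m, hm⟩ := eventually_rowSum_eq.exists
  rw [rowSum_unitInput, rowSum_zeroInput] at hm
  exact pow_ne_zero (m + 1) (by norm_num) hm

/-- Hansen's height-2 tower `Γ_{n,k}(x) = Σ_{m<k} 2^{-(m+1)} x(n,m)`,
`Γ_n(x) = Σ_m 2^{-(m+1)} x(n,m)`, `Ξ(x) = lim_n Γ_n(x)`:
(a) each deepest estimator `Γ_{n,k}` together with the constant query policy
`{π_{n,m} : m < k}` is a general algorithm; (b) the iterated limit equalities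
`lim_k Γ_{n,k} = Γ_n` and `lim_n Γ_n = Ξ` hold pointwise; but (c) no intermediate estimator
`Γ_n` is a general algorithm. Hence Hansen's original height-2 definition (finite-information
required only at the deepest level) is strictly weaker than requiring all levels to be
general algorithms. -/
theorem stmt15 :
    (∀ n k : ℕ, ∃ Q : Finset (Xt → ℂ),
        (Q : Set (Xt → ℂ)) = (fun m => coordEval n m) '' Set.Iio k ∧
        (Q : Set (Xt → ℂ)) ⊆ ΛX ∧
        (∀ x y : Xt, (∀ g ∈ Q, g y = g x) → rowPartial y.1 n k = rowPartial x.1 n k)) ∧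
    (∀ (x : Xt) (n : ℕ), Tendsto (fun k => rowPartial x.1 n k) atTop (nhds (rowSum x.1 n))) ∧
    (∀ x : Xt, Tendsto (fun n => rowSum x.1 n) atTop (nhds (XiH x))) ∧
    (∀ n : ℕ, ¬ IsGenAlg ΛX (fun x : Xt => rowSum x.1 n)) :=
  ⟨fun n k => ⟨rowQueries n k, coe_rowQueries n k, rowQueries_subset_ΛX n k,
      fun _ _ => rowPartial_eq_of_rowQueries⟩,
    fun x n => tendsto_rowPartial x.1 n,
    fun x => x.2.choose_spec,
    not_isGenAlg_rowSum⟩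

end
end
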